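/- Consider an ICQS instance, let P1, P2 be proximity bounds for Q1 and Q2, and suppose there are s1, s2 ∈ [0,1) such that ‖R1v‖ ≤ s1‖v‖ for all v ∈ ℝ^{n_y} and ‖R2w‖ ≤ s2‖w‖ for all w ∈ ℝ^{n_x}. Let S_x, S_y form a best-response cycle, let λ1ˣ be the largest eigenvalue of Q1 and λ1ʸ the largest eigenvalue of Q2. Then every MNE of the game restricted to S_x × S_y is a (Δ_x, Δ_y)-MNE of the ICQS, where Δ_x = λ1ˣ·(P1 + (2·P2·s1 + 2·P1)/(1 − s1·s2))² and Δ_y = λ1ʸ·(P2 + (2·P1·s2 + 2·P2)/(1 − s1·s2))². -/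

import Mathlib

/-!
Write `c_y = C₁ y + d₁`, so that `-Q₁⁻¹ c_y` is the continuous best response of the x-player to `y`.
Completing the square gives `f₁(x,y) = ½ (x + Q₁⁻¹ c_y)ᵀ Q₁ (x + Q₁⁻¹ c_y) - ½ (Q₁⁻¹ c_y)ᵀ c_y`, so for
any fixed `y` the regret of playing `u` is at most `½ λ ‖u + Q₁⁻¹ c_y‖²`, with `λ` the largest
eigenvalue of `Q₁` (`regret_le`).

Two best responses `x, x'` to `y, y'` satisfy `‖x - x'‖ ≤ s₁ ‖y - y'‖ + 2 P₁` (`response_dist`), and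
symmetrically for the y-player. Going once around the best-response cycle, the diameter `D` of `S_x`
satisfies `D ≤ s₁ (s₂ D + 2 P₂) + 2 P₁`, whence `D ≤ (2 P₂ s₁ + 2 P₁) / (1 - s₁ s₂)` (`diam_le`).
A point `u ∈ S_x` is thus within `P₁ + D` of the continuous best response to every `y ∈ S_y`, because
some best response to `y` lies in `S_x`. Averaging the pointwise regret of such a `u` over `q` bounds
the regret of `u`, hence that of the restricted equilibrium, which is no worse than `u`
(`one_sided`). The y-player's cost is the x-player's cost with the roles exchanged, so the
same one-sided statement covers both players.
-/

open Matrix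

/-- Coercion of an integer vector to a real vector. -/
def ic {n : ℕ} (v : Fin n → ℤ) : Fin n → ℝ := fun i => (v i : ℝ)

/-- Euclidean norm of a real vector. -/
noncomputable def euclNorm {n : ℕ} (x : Fin n → ℝ) : ℝ := Real.sqrt (∑ i, x i ^ 2)

/-- Norm of a pair of vectors: `√(‖x‖² + ‖y‖²)`. -/
noncomputable def pairNorm {m n : ℕ} (x : Fin m → ℝ) (y : Fin n → ℝ) : ℝ :=
  Real.sqrt (euclNorm x ^ 2 + euclNorm y ^ 2)

/-- Cost of the x-player: `f1(x,y) = (1/2)xᵀQ1x + (C1 y + d1)ᵀx`. -/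
noncomputable def f1 {nx ny : ℕ} (Q1 : Matrix (Fin nx) (Fin nx) ℝ)
    (C1 : Matrix (Fin nx) (Fin ny) ℝ) (d1 : Fin nx → ℝ)
    (x : Fin nx → ℝ) (y : Fin ny → ℝ) : ℝ :=
  (1 / 2) * (x ⬝ᵥ Q1 *ᵥ x) + (C1 *ᵥ y + d1) ⬝ᵥ x

/-- Cost of the y-player: `f2(x,y) = (1/2)yᵀQ2y + (C2 x + d2)ᵀy`. -/
noncomputable def f2 {nx ny : ℕ} (Q2 : Matrix (Fin ny) (Fin ny) ℝ)
    (C2 : Matrix (Fin ny) (Fin nx) ℝ) (d2 : Fin ny → ℝ)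
    (x : Fin nx → ℝ) (y : Fin ny → ℝ) : ℝ :=
  (1 / 2) * (y ⬝ᵥ Q2 *ᵥ y) + (C2 *ᵥ x + d2) ⬝ᵥ y

/-- `P` is a proximity bound for `Q`: every integer minimizer of
`(1/2)xᵀQx + cᵀx` is within distance `P` of the continuous minimizer `-Q⁻¹c`. -/
def IsProxBound {n : ℕ} (Q : Matrix (Fin n) (Fin n) ℝ) (P : ℝ) : Prop :=
  0 ≤ P ∧ ∀ (c : Fin n → ℝ) (v : Fin n → ℤ),
    (∀ w : Fin n → ℤ,
      (1 / 2) * (ic v ⬝ᵥ Q *ᵥ ic v) + c ⬝ᵥ ic v ≤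
      (1 / 2) * (ic w ⬝ᵥ Q *ᵥ ic w) + c ⬝ᵥ ic w) →
    euclNorm (ic v + Q⁻¹ *ᵥ c) ≤ P

/-- `l` is the largest eigenvalue of `Q`. -/
def IsMaxEigen {n : ℕ} (Q : Matrix (Fin n) (Fin n) ℝ) (l : ℝ) : Prop :=
  (∃ v : Fin n → ℝ, v ≠ 0 ∧ Q *ᵥ v = l • v) ∧
  (∀ (m : ℝ) (v : Fin n → ℝ), v ≠ 0 → Q *ᵥ v = m • v → m ≤ l)

/-- Finite nonempty sets `Sx`, `Sy` form a best-response cycle. -/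
def BRCycle {nx ny : ℕ} (Q1 : Matrix (Fin nx) (Fin nx) ℝ)
    (C1 : Matrix (Fin nx) (Fin ny) ℝ) (d1 : Fin nx → ℝ)
    (Q2 : Matrix (Fin ny) (Fin ny) ℝ)
    (C2 : Matrix (Fin ny) (Fin nx) ℝ) (d2 : Fin ny → ℝ)
    (Sx : Finset (Fin nx → ℤ)) (Sy : Finset (Fin ny → ℤ)) : Prop :=
  Sx.Nonempty ∧ Sy.Nonempty ∧
  (∀ y ∈ Sy, ∃ x ∈ Sx, ∀ w : Fin nx → ℤ,
    f1 Q1 C1 d1 (ic x) (ic y) ≤ f1 Q1 C1 d1 (ic w) (ic y)) ∧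
  (∀ x ∈ Sx, ∃ y ∈ Sy, ∀ w : Fin ny → ℤ,
    f2 Q2 C2 d2 (ic x) (ic y) ≤ f2 Q2 C2 d2 (ic x) (ic w)) ∧
  (∀ x ∈ Sx, ∃ y ∈ Sy, ∀ w : Fin nx → ℤ,
    f1 Q1 C1 d1 (ic x) (ic y) ≤ f1 Q1 C1 d1 (ic w) (ic y)) ∧
  (∀ y ∈ Sy, ∃ x ∈ Sx, ∀ w : Fin ny → ℤ,
    f2 Q2 C2 d2 (ic x) (ic y) ≤ f2 Q2 C2 d2 (ic x) (ic w))

lemma euclNorm_eq_norm {n : ℕ} (x : Fin n → ℝ) : euclNorm x = ‖WithLp.toLp 2 x‖ := by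
  simp [euclNorm, EuclideanSpace.norm_eq]

lemma euclNorm_nonneg {n : ℕ} (x : Fin n → ℝ) : 0 ≤ euclNorm x := Real.sqrt_nonneg _

lemma euclNorm_add_le {n : ℕ} (x y : Fin n → ℝ) :
    euclNorm (x + y) ≤ euclNorm x + euclNorm y := by
  simp only [euclNorm_eq_norm, WithLp.toLp_add]
  exact norm_add_le _ _

lemma euclNorm_sub_le {n : ℕ} (x y : Fin n → ℝ) :
    euclNorm (x - y) ≤ euclNorm x + euclNorm y := by
  simp only [euclNorm_eq_norm, WithLp.toLp_sub]
  exact norm_sub_le _ _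

lemma dotProduct_self_eq_euclNorm_sq {n : ℕ} (x : Fin n → ℝ) : x ⬝ᵥ x = euclNorm x ^ 2 := by
  rw [euclNorm, Real.sq_sqrt (Finset.sum_nonneg fun i _ => sq_nonneg _)]
  simp [dotProduct, sq]

/-- The Rayleigh bound: `l • 1 - Q` is positive semidefinite, since an eigenvalue `m` of it
corresponds to the eigenvalue `l - m` of `Q`. -/
lemma quad_le_maxEigen {n : ℕ} {Q : Matrix (Fin n) (Fin n) ℝ} (hQ : Q.PosDef) {l : ℝ}
    (hl : IsMaxEigen Q l) (x : Fin n → ℝ) : x ⬝ᵥ Q *ᵥ x ≤ l * euclNorm x ^ 2 := by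
  have hB : (l • (1 : Matrix (Fin n) (Fin n) ℝ) - Q).IsHermitian := by
    refine Matrix.IsHermitian.sub ?_ hQ.isHermitian
    simp [Matrix.IsHermitian]
  have hpsd : (l • (1 : Matrix (Fin n) (Fin n) ℝ) - Q).PosSemidef := by
    rw [hB.posSemidef_iff_eigenvalues_nonneg]
    intro i
    have h1 := hB.mulVec_eigenvectorBasis i
    have h0 : (hB.eigenvectorBasis i : Fin n → ℝ) ≠ 0 := by
      intro h
      have h2 := hB.eigenvectorBasis.orthonormal.ne_zero i
      exact h2 (by ext j; exact congrFun h j)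
    have h3 := hl.2 (l - hB.eigenvalues i) _ h0 (by
      rw [sub_mulVec, smul_mulVec, one_mulVec] at h1
      rw [sub_smul, ← h1]
      abel)
    simp only [Pi.zero_apply]
    linarith
  have h := hpsd.dotProduct_mulVec_nonneg x
  simp only [star_trivial, sub_mulVec, smul_mulVec, one_mulVec, dotProduct_sub,
    dotProduct_smul, smul_eq_mul, dotProduct_self_eq_euclNorm_sq] at h
  linarith

lemma maxEigen_nonneg {n : ℕ} {Q : Matrix (Fin n) (Fin n) ℝ} (hQ : Q.PosDef) {l : ℝ}
    (hl : IsMaxEigen Q l) : 0 ≤ l := by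
  obtain ⟨⟨v, hv, hQv⟩, -⟩ := hl
  have h := hQ.posSemidef.dotProduct_mulVec_nonneg v
  simp only [star_trivial, hQv, dotProduct_smul, smul_eq_mul] at h
  have h2 : 0 < v ⬝ᵥ v :=
    lt_of_le_of_ne (dotProduct_self_eq_euclNorm_sq v ▸ sq_nonneg _)
      (fun h => hv (dotProduct_self_eq_zero.1 h.symm))
  exact nonneg_of_mul_nonneg_left h h2

/-- Completing the square around the continuous minimizer `-Q⁻¹ c`. -/
lemma complete_square {n : ℕ} {Q : Matrix (Fin n) (Fin n) ℝ} (hQ : Q.PosDef)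
    (c u : Fin n → ℝ) :
    (1 / 2) * (u ⬝ᵥ Q *ᵥ u) + c ⬝ᵥ u =
      (1 / 2) * ((u + Q⁻¹ *ᵥ c) ⬝ᵥ Q *ᵥ (u + Q⁻¹ *ᵥ c)) - (1 / 2) * ((Q⁻¹ *ᵥ c) ⬝ᵥ c) := by
  have hz : Q *ᵥ (Q⁻¹ *ᵥ c) = c := by
    rw [mulVec_mulVec, mul_nonsing_inv _ ((isUnit_iff_isUnit_det _).1 hQ.isUnit), one_mulVec]
  have hT : Qᵀ = Q := by
    have h := hQ.isHermitian
    rwa [Matrix.IsHermitian, conjTranspose_eq_transpose_of_trivial] at h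
  have hs : (Q⁻¹ *ᵥ c) ⬝ᵥ Q *ᵥ u = c ⬝ᵥ u := by
    rw [dotProduct_mulVec, ← mulVec_transpose, hT, hz]
  rw [mulVec_add, hz, add_dotProduct, dotProduct_add, dotProduct_add, hs, dotProduct_comm u c]
  ring

lemma regret_le {nx ny : ℕ} {Q : Matrix (Fin nx) (Fin nx) ℝ} (hQ : Q.PosDef) {l : ℝ}
    (hl : IsMaxEigen Q l) (C : Matrix (Fin nx) (Fin ny) ℝ) (d u w : Fin nx → ℝ)
    (y : Fin ny → ℝ) :
    f1 Q C d u y ≤ f1 Q C d w y + (1 / 2) * (l * euclNorm (u + Q⁻¹ *ᵥ (C *ᵥ y + d)) ^ 2) := by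
  unfold f1
  rw [complete_square hQ _ u, complete_square hQ _ w]
  have h1 := quad_le_maxEigen hQ hl (u + Q⁻¹ *ᵥ (C *ᵥ y + d))
  have h2 := hQ.posSemidef.dotProduct_mulVec_nonneg (w + Q⁻¹ *ᵥ (C *ᵥ y + d))
  simp only [star_trivial] at h2
  linarith

lemma response_dist {nx ny : ℕ} {Q : Matrix (Fin nx) (Fin nx) ℝ}
    {C : Matrix (Fin nx) (Fin ny) ℝ} {d : Fin nx → ℝ} {P s : ℝ} (hP : IsProxBound Q P)
    (hR : ∀ v : Fin ny → ℝ, euclNorm ((Q⁻¹ * C) *ᵥ v) ≤ s * euclNorm v)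
    {x x' : Fin nx → ℤ} {y y' : Fin ny → ℤ}
    (hx : ∀ w : Fin nx → ℤ, f1 Q C d (ic x) (ic y) ≤ f1 Q C d (ic w) (ic y))
    (hx' : ∀ w : Fin nx → ℤ, f1 Q C d (ic x') (ic y') ≤ f1 Q C d (ic w) (ic y')) :
    euclNorm (ic x - ic x') ≤ s * euclNorm (ic y - ic y') + 2 * P := by
  have h1 := hP.2 _ x hx
  have h2 := hP.2 _ x' hx'
  have h3 := hR (ic y - ic y')
  have e : ic x - ic x' = ((ic x + Q⁻¹ *ᵥ (C *ᵥ ic y + d)) - (ic x' + Q⁻¹ *ᵥ (C *ᵥ ic y' + d)))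
      - (Q⁻¹ * C) *ᵥ (ic y - ic y') := by
    simp only [mulVec_add, mulVec_sub, ← mulVec_mulVec]
    abel
  rw [e]
  have h4 := euclNorm_sub_le ((ic x + Q⁻¹ *ᵥ (C *ᵥ ic y + d)) -
    (ic x' + Q⁻¹ *ᵥ (C *ᵥ ic y' + d))) ((Q⁻¹ * C) *ᵥ (ic y - ic y'))
  have h5 := euclNorm_sub_le (ic x + Q⁻¹ *ᵥ (C *ᵥ ic y + d)) (ic x' + Q⁻¹ *ᵥ (C *ᵥ ic y' + d))
  linarith

section OneSided

/- `Q, C, d` are the data of the player under consideration and `Q', C', d'` those of the opponent,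
whose cost is also written with `f1`, the opponent's own strategy coming first. -/
variable {nx ny : ℕ} {Q : Matrix (Fin nx) (Fin nx) ℝ} {Q' : Matrix (Fin ny) (Fin ny) ℝ}
  {C : Matrix (Fin nx) (Fin ny) ℝ} {C' : Matrix (Fin ny) (Fin nx) ℝ}
  {d : Fin nx → ℝ} {d' : Fin ny → ℝ} {P P' s s' : ℝ}
  {Sx : Finset (Fin nx → ℤ)} {Sy : Finset (Fin ny → ℤ)}

/-- Bound on the diameter of `Sx`, when every point of `Sx` is a best response to a point of `Sy`
and conversely: the pair at maximal distance is traced once around the cycle. -/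
lemma diam_le (hP : IsProxBound Q P) (hP' : IsProxBound Q' P')
    (hs : 0 ≤ s) (hss : s * s' < 1)
    (hR : ∀ v : Fin ny → ℝ, euclNorm ((Q⁻¹ * C) *ᵥ v) ≤ s * euclNorm v)
    (hR' : ∀ w : Fin nx → ℝ, euclNorm ((Q'⁻¹ * C') *ᵥ w) ≤ s' * euclNorm w)
    (hs'0 : 0 ≤ s')
    (hx : ∀ x ∈ Sx, ∃ y ∈ Sy, ∀ w : Fin nx → ℤ,
      f1 Q C d (ic x) (ic y) ≤ f1 Q C d (ic w) (ic y))
    (hy : ∀ y ∈ Sy, ∃ x ∈ Sx, ∀ w : Fin ny → ℤ,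
      f1 Q' C' d' (ic y) (ic x) ≤ f1 Q' C' d' (ic w) (ic x))
    {u v : Fin nx → ℤ} (hu : u ∈ Sx) (hv : v ∈ Sx) :
    euclNorm (ic u - ic v) ≤ (2 * P' * s + 2 * P) / (1 - s * s') := by
  obtain ⟨⟨a, b⟩, hab, hmax⟩ := Finset.exists_max_image (Sx ×ˢ Sx)
    (fun z => euclNorm (ic z.1 - ic z.2)) ⟨(u, v), Finset.mk_mem_product hu hv⟩
  obtain ⟨ha, hb⟩ := Finset.mem_product.1 hab
  refine (hmax (u, v) (Finset.mk_mem_product hu hv)).trans ?_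
  obtain ⟨y, hyS, hay⟩ := hx a ha
  obtain ⟨y', hyS', hby⟩ := hx b hb
  obtain ⟨a', ha', hya⟩ := hy y hyS
  obtain ⟨b', hb', hyb⟩ := hy y' hyS'
  have h1 := response_dist hP hR hay hby
  have h2 := response_dist hP' hR' hya hyb
  have h3 : euclNorm (ic a' - ic b') ≤ euclNorm (ic a - ic b) :=
    hmax (a', b') (Finset.mk_mem_product ha' hb')
  have h4 := mul_le_mul_of_nonneg_left
    (h2.trans (add_le_add_left (mul_le_mul_of_nonneg_left h3 hs'0) _)) hs
  rw [le_div_iff₀ (by linarith)]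
  dsimp only
  linarith

/-- The approximate equilibrium condition for one player. `V` is the expected cost of the
restricted equilibrium, which is at most the expected cost of every `x' ∈ Sx`. -/
lemma one_sided (hQ : Q.PosDef) (hP : IsProxBound Q P) (hP' : IsProxBound Q' P')
    (hs : 0 ≤ s) (hs'0 : 0 ≤ s') (hss : s * s' < 1)
    (hR : ∀ v : Fin ny → ℝ, euclNorm ((Q⁻¹ * C) *ᵥ v) ≤ s * euclNorm v)
    (hR' : ∀ w : Fin nx → ℝ, euclNorm ((Q'⁻¹ * C') *ᵥ w) ≤ s' * euclNorm w)
    (hne : Sx.Nonempty)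
    (hbr : ∀ y ∈ Sy, ∃ x ∈ Sx, ∀ w : Fin nx → ℤ,
      f1 Q C d (ic x) (ic y) ≤ f1 Q C d (ic w) (ic y))
    (hx : ∀ x ∈ Sx, ∃ y ∈ Sy, ∀ w : Fin nx → ℤ,
      f1 Q C d (ic x) (ic y) ≤ f1 Q C d (ic w) (ic y))
    (hy : ∀ y ∈ Sy, ∃ x ∈ Sx, ∀ w : Fin ny → ℤ,
      f1 Q' C' d' (ic y) (ic x) ≤ f1 Q' C' d' (ic w) (ic x))
    {l : ℝ} (hl : IsMaxEigen Q l) {q : (Fin ny → ℤ) → ℝ} (hq : ∀ y ∈ Sy, 0 ≤ q y)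
    (hqsum : ∑ y ∈ Sy, q y = 1) {V : ℝ}
    (hV : ∀ x' ∈ Sx, V ≤ ∑ y ∈ Sy, q y * f1 Q C d (ic x') (ic y)) (x' : Fin nx → ℤ) :
    V ≤ (∑ y ∈ Sy, q y * f1 Q C d (ic x') (ic y)) +
      l * (P + (2 * P' * s + 2 * P) / (1 - s * s')) ^ 2 := by
  obtain ⟨u, hu⟩ := hne
  set B := P + (2 * P' * s + 2 * P) / (1 - s * s') with hB
  have hl0 := maxEigen_nonneg hQ hl
  have key : ∀ y ∈ Sy, q y * f1 Q C d (ic u) (ic y) ≤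
      q y * f1 Q C d (ic x') (ic y) + q y * (l * B ^ 2) := by
    intro y hyS
    obtain ⟨x, hxS, hxy⟩ := hbr y hyS
    have h1 := hP.2 _ x hxy
    have h2 := diam_le hP hP' hs hss hR hR' hs'0 hx hy hu hxS
    have h3 := euclNorm_add_le (ic x + Q⁻¹ *ᵥ (C *ᵥ ic y + d)) (ic u - ic x)
    rw [show ic x + Q⁻¹ *ᵥ (C *ᵥ ic y + d) + (ic u - ic x) =
      ic u + Q⁻¹ *ᵥ (C *ᵥ ic y + d) by abel] at h3
    have h4 : euclNorm (ic u + Q⁻¹ *ᵥ (C *ᵥ ic y + d)) ^ 2 ≤ B ^ 2 :=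
      pow_le_pow_left₀ (euclNorm_nonneg _) (by linarith) 2
    have h5 := mul_le_mul_of_nonneg_left h4 hl0
    have h6 := regret_le hQ hl C d (ic u) (ic x') (ic y)
    have h7 := mul_nonneg hl0 (sq_nonneg B)
    rw [← mul_add]
    exact mul_le_mul_of_nonneg_left (by linarith) (hq y hyS)
  calc V ≤ ∑ y ∈ Sy, q y * f1 Q C d (ic u) (ic y) := hV u hu
    _ ≤ ∑ y ∈ Sy, (q y * f1 Q C d (ic x') (ic y) + q y * (l * B ^ 2)) := Finset.sum_le_sum key
    _ = _ := by rw [Finset.sum_add_distrib, ← Finset.sum_mul, hqsum, one_mul]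

end OneSided

/-- Under positively adequate objectives, any MNE of the game restricted to a
best-response cycle is a `(Δx, Δy)`-MNE of the full integer game with explicit
`Δx`, `Δy`. -/
theorem restricted_MNE_is_approx_MNE_explicit {nx ny : ℕ}
    (Q1 : Matrix (Fin nx) (Fin nx) ℝ) (Q2 : Matrix (Fin ny) (Fin ny) ℝ)
    (hQ1 : Q1.PosDef) (hQ2 : Q2.PosDef)
    (C1 : Matrix (Fin nx) (Fin ny) ℝ) (C2 : Matrix (Fin ny) (Fin nx) ℝ)
    (d1 : Fin nx → ℝ) (d2 : Fin ny → ℝ)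
    (P1 P2 : ℝ) (hP1 : IsProxBound Q1 P1) (hP2 : IsProxBound Q2 P2)
    (s1 s2 : ℝ) (hs1 : 0 ≤ s1) (hs1' : s1 < 1) (hs2 : 0 ≤ s2) (hs2' : s2 < 1)
    (hR1 : ∀ v : Fin ny → ℝ, euclNorm ((Q1⁻¹ * C1) *ᵥ v) ≤ s1 * euclNorm v)
    (hR2 : ∀ w : Fin nx → ℝ, euclNorm ((Q2⁻¹ * C2) *ᵥ w) ≤ s2 * euclNorm w)
    (Sx : Finset (Fin nx → ℤ)) (Sy : Finset (Fin ny → ℤ))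
    (hcyc : BRCycle Q1 C1 d1 Q2 C2 d2 Sx Sy)
    (l1x l1y : ℝ) (hl1x : IsMaxEigen Q1 l1x) (hl1y : IsMaxEigen Q2 l1y)
    (p : (Fin nx → ℤ) → ℝ) (q : (Fin ny → ℤ) → ℝ)
    (hp : ∀ x ∈ Sx, 0 ≤ p x ∧ p x ≤ 1) (hq : ∀ y ∈ Sy, 0 ≤ q y ∧ q y ≤ 1)
    (hpsum : ∑ x ∈ Sx, p x = 1) (hqsum : ∑ y ∈ Sy, q y = 1)
    (hMNE1 : ∀ x' ∈ Sx,
      ∑ x ∈ Sx, ∑ y ∈ Sy, p x * q y * f1 Q1 C1 d1 (ic x) (ic y) ≤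
        ∑ y ∈ Sy, q y * f1 Q1 C1 d1 (ic x') (ic y))
    (hMNE2 : ∀ y' ∈ Sy,
      ∑ x ∈ Sx, ∑ y ∈ Sy, p x * q y * f2 Q2 C2 d2 (ic x) (ic y) ≤
        ∑ x ∈ Sx, p x * f2 Q2 C2 d2 (ic x) (ic y')) :
    (∀ x' : Fin nx → ℤ,
      ∑ x ∈ Sx, ∑ y ∈ Sy, p x * q y * f1 Q1 C1 d1 (ic x) (ic y) ≤
        (∑ y ∈ Sy, q y * f1 Q1 C1 d1 (ic x') (ic y)) +
          l1x * (P1 + (2 * P2 * s1 + 2 * P1) / (1 - s1 * s2)) ^ 2) ∧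
    (∀ y' : Fin ny → ℤ,
      ∑ x ∈ Sx, ∑ y ∈ Sy, p x * q y * f2 Q2 C2 d2 (ic x) (ic y) ≤
        (∑ x ∈ Sx, p x * f2 Q2 C2 d2 (ic x) (ic y')) +
          l1y * (P2 + (2 * P1 * s2 + 2 * P2) / (1 - s1 * s2)) ^ 2) := by
  obtain ⟨hxne, hyne, hbrx, hbry, hx, hy⟩ := hcyc
  have hss : s1 * s2 < 1 := mul_lt_one_of_nonneg_of_lt_one_left hs1 hs1' hs2'.le
  refine ⟨fun x' => ?_, fun y' => ?_⟩
  · exact one_sided hQ1 hP1 hP2 hs1 hs2 hss hR1 hR2 hxne hbrx hx hy hl1x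
      (fun y h => (hq y h).1) hqsum hMNE1 x'
  · rw [mul_comm s1 s2]
    exact one_sided hQ2 hP2 hP1 hs2 hs1 (by linarith) hR2 hR1 hyne hbry hy hx hl1y
      (fun x h => (hp x h).1) hpsum hMNE2 y'
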